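/- arXiv:math/0104131 — 8 statements merged into one kernel-verified Lean document; each statement's English description precedes it below -/
import Mathlib

section
/- Let m be a positive integer and write m = 2^k·m' with m' odd. Then for every function x : ℕ → ℚ, 2·I_{2m}(x) = I_m(x²) + I_{m'}(x'), where x² denotes the function r ↦ x(r)² and x' denotes the function r ↦ x(2^{k+1}·r). -/
open Finset

/-- Cycle index of the regular cyclic group of order `n`:
`I_n(x) = (1/n) * ∑_{r | n} φ(r) * x(r)^(n/r)`. -/
def cycleIndex (n : ℕ) (x : ℕ → ℚ) : ℚ :=
  (1 / (n : ℚ)) * ∑ r ∈ n.divisors, (Nat.totient r : ℚ) * x r ^ (n / r)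

/-! For a prime `p` not dividing `n`, the divisors of `p ^ (k + 1) * n` are those of `p ^ k * n`,
on which `x r` only has its exponent multiplied by `p`, and the products `p ^ (k + 1) * r` with
`r ∣ n`, on which `φ` splits off the factor `φ (p ^ (k + 1)) = p ^ k * (p - 1)`. -/

section SumDivisors

variable {M : Type*} [AddCommMonoid M]

theorem sum_divisors_mul_of_coprime {m n : ℕ} (hmn : m.Coprime n) (f : ℕ → M) :
    ∑ d ∈ (m * n).divisors, f d = ∑ a ∈ m.divisors, ∑ b ∈ n.divisors, f (a * b) := by
  rw [Nat.divisors_mul, mul_def, sum_image hmn.mul_injOn_divisors, sum_product]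

theorem sum_divisors_prime_pow_succ_mul {p n : ℕ} (hp : p.Prime) (hpn : ¬p ∣ n) (k : ℕ)
    (f : ℕ → M) :
    ∑ r ∈ (p ^ (k + 1) * n).divisors, f r =
      ∑ r ∈ (p ^ k * n).divisors, f r + ∑ r ∈ n.divisors, f (p ^ (k + 1) * r) := by
  have hcop (i : ℕ) : (p ^ i).Coprime n := (hp.coprime_iff_not_dvd.mpr hpn).pow_left i
  rw [sum_divisors_mul_of_coprime (hcop _), sum_divisors_mul_of_coprime (hcop _),
    Nat.sum_divisors_prime_pow hp, Nat.sum_divisors_prime_pow hp, sum_range_succ]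

end SumDivisors

theorem natCast_mul_cycleIndex (n : ℕ) (x : ℕ → ℚ) :
    n * cycleIndex n x = ∑ r ∈ n.divisors, (Nat.totient r : ℚ) * x r ^ (n / r) := by
  obtain rfl | hn := eq_or_ne n 0
  · simp
  · rw [cycleIndex, ← mul_assoc, mul_one_div_cancel (Nat.cast_ne_zero.mpr hn), one_mul]

theorem sum_divisors_totient_mul_pow_mul_div (d m : ℕ) (x : ℕ → ℚ) :
    ∑ r ∈ m.divisors, (Nat.totient r : ℚ) * x r ^ (d * m / r) =
      m * cycleIndex m (fun r => x r ^ d) := by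
  rw [natCast_mul_cycleIndex]
  refine sum_congr rfl fun r hr => ?_
  rw [Nat.mul_div_assoc _ (Nat.dvd_of_mem_divisors hr), pow_mul]

theorem sum_divisors_totient_mul_left_mul_pow {d n : ℕ} (hd : 0 < d) (hdn : d.Coprime n)
    (x : ℕ → ℚ) :
    ∑ r ∈ n.divisors, (Nat.totient (d * r) : ℚ) * x (d * r) ^ (d * n / (d * r)) =
      Nat.totient d * (n * cycleIndex n (fun r => x (d * r))) := by
  rw [natCast_mul_cycleIndex, mul_sum]
  refine sum_congr rfl fun r hr => ?_
  have hdr : d.Coprime r := hdn.coprime_dvd_right (Nat.dvd_of_mem_divisors hr)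
  rw [Nat.mul_div_mul_left _ _ hd, Nat.totient_mul hdr, Nat.cast_mul, mul_assoc]

theorem two_mul_cycleIndex_two_mul_general {p n : ℕ} (hp : p.Prime) (hpn : ¬p ∣ n) (k : ℕ)
    (x : ℕ → ℚ) :
    p * cycleIndex (p * (p ^ k * n)) x =
      cycleIndex (p ^ k * n) (fun r => x r ^ p) +
        (p - 1) * cycleIndex n (fun r => x (p ^ (k + 1) * r)) := by
  have hn : n ≠ 0 := fun h => hpn (h ▸ dvd_zero p)
  have hm : ((p ^ k * n : ℕ) : ℚ) ≠ 0 :=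
    Nat.cast_ne_zero.mpr (mul_ne_zero (pow_ne_zero k hp.ne_zero) hn)
  have hcop : (p ^ (k + 1)).Coprime n := (hp.coprime_iff_not_dvd.mpr hpn).pow_left _
  have hmul : p * (p ^ k * n) = p ^ (k + 1) * n := by rw [← mul_assoc, ← pow_succ']
  have htot : (Nat.totient (p ^ (k + 1)) : ℚ) = p ^ k * (p - 1) := by
    rw [Nat.totient_prime_pow_succ hp, Nat.cast_mul, Nat.cast_pow, Nat.cast_pred hp.pos]
  refine mul_left_cancel₀ hm ?_
  calc ((p ^ k * n : ℕ) : ℚ) * (p * cycleIndex (p * (p ^ k * n)) x)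
      = ((p * (p ^ k * n) : ℕ) : ℚ) * cycleIndex (p * (p ^ k * n)) x := by
        push_cast; ring
    _ = ∑ r ∈ (p ^ k * n).divisors, (Nat.totient r : ℚ) * x r ^ (p * (p ^ k * n) / r) +
          ∑ r ∈ n.divisors, (Nat.totient (p ^ (k + 1) * r) : ℚ) *
            x (p ^ (k + 1) * r) ^ (p ^ (k + 1) * n / (p ^ (k + 1) * r)) := by
        rw [natCast_mul_cycleIndex, hmul, sum_divisors_prime_pow_succ_mul hp hpn]
    _ = ((p ^ k * n : ℕ) : ℚ) * cycleIndex (p ^ k * n) (fun r => x r ^ p) +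
          p ^ k * (p - 1) * (n * cycleIndex n (fun r => x (p ^ (k + 1) * r))) := by
        rw [sum_divisors_totient_mul_pow_mul_div,
          sum_divisors_totient_mul_left_mul_pow (pow_pos hp.pos _) hcop, htot]
    _ = ((p ^ k * n : ℕ) : ℚ) * (cycleIndex (p ^ k * n) (fun r => x r ^ p) +
          (p - 1) * cycleIndex n (fun r => x (p ^ (k + 1) * r))) := by
        push_cast; ring

/-- For `m = 2^k * m'` with `m'` odd,
`2·I_{2m}(x) = I_m(x²) + I_{m'}(r ↦ x(2^{k+1}·r))`. -/
theorem two_mul_cycleIndex_two_mul (m k m' : ℕ) (hm : 0 < m) (hodd : Odd m')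
    (hfac : m = 2 ^ k * m') (x : ℕ → ℚ) :
    2 * cycleIndex (2 * m) x =
      cycleIndex m (fun r => x r ^ 2) +
        cycleIndex m' (fun r => x (2 ^ (k + 1) * r)) := by
  have h := two_mul_cycleIndex_two_mul_general Nat.prime_two hodd.not_two_dvd_nat k x
  rwa [Nat.cast_two, show (2 - 1 : ℚ) = 1 by norm_num, one_mul, ← hfac] at h
end

section
/- Let m be a positive integer. Then for every function x : ℕ → ℚ, I_m(x) = I_{2m}(y) + (1/(2m))·∑_{r | m, r odd} φ(r)·x(r)^{m/r}, where y : ℕ → ℚ is defined by y(r) := 0 for odd r and y(r) := x(r/2) for even r. -/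
open Finset

/-!
The argument works with any prime `p` in place of `2`: let `y(r) = x(r/p)` if `p ∣ r` and
`y(r) = 0` otherwise. Only the divisors `r = p * s` with `s ∣ m` contribute to `I_{pm}(y)`, so
`p * m * I_{pm}(y)` is the sum of the `φ(p * s) * x(s)^(m/s)`, while `p * m * I_m(x)` is the sum of
the `p * φ(s) * x(s)^(m/s)`. The difference `p * φ(s) - φ(p * s)` is `φ(s)` if `p ∤ s` and `0`
otherwise.
-/

theorem filter_dvd_divisors_mul {k : ℕ} (hk : k ≠ 0) (m : ℕ) :
    {r ∈ (k * m).divisors | k ∣ r} = m.divisors.image (k * ·) := by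
  ext r
  simp only [mem_filter, mem_image, Nat.mem_divisors]
  constructor
  · rintro ⟨⟨hdvd, hne⟩, s, rfl⟩
    exact ⟨s, ⟨Nat.dvd_of_mul_dvd_mul_left hk.pos hdvd, right_ne_zero_of_mul hne⟩, rfl⟩
  · rintro ⟨s, ⟨hdvd, hne⟩, rfl⟩
    exact ⟨⟨mul_dvd_mul_left k hdvd, mul_ne_zero hk hne⟩, dvd_mul_right k s⟩

theorem sum_filter_dvd_divisors_mul {M : Type*} [AddCommMonoid M] {k : ℕ} (hk : k ≠ 0) (m : ℕ)
    (f : ℕ → M) :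
    ∑ r ∈ (k * m).divisors with k ∣ r, f r = ∑ s ∈ m.divisors, f (k * s) := by
  rw [filter_dvd_divisors_mul hk, sum_image (mul_right_injective₀ hk).injOn]

theorem cycleIndex_mul_ite_dvd {k : ℕ} (hk : k ≠ 0) (m : ℕ) (x : ℕ → ℚ) :
    cycleIndex (k * m) (fun r => if k ∣ r then x (r / k) else 0) =
      (1 / ((k : ℚ) * m)) * ∑ s ∈ m.divisors, (Nat.totient (k * s) : ℚ) * x s ^ (m / s) := by
  have hvanish : ∀ r ∈ (k * m).divisors,
      (Nat.totient r : ℚ) * (if k ∣ r then x (r / k) else 0) ^ (k * m / r) ≠ 0 → k ∣ r := by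
    intro r hr hne
    by_contra hdvd
    have hexp : k * m / r ≠ 0 :=
      (Nat.div_pos (Nat.divisor_le hr) (Nat.pos_of_mem_divisors hr)).ne'
    exact hne (by rw [if_neg hdvd, zero_pow hexp, mul_zero])
  rw [cycleIndex, Nat.cast_mul, ← sum_filter_of_ne hvanish, sum_filter_dvd_divisors_mul hk]
  simp only [dvd_mul_right, if_true, Nat.mul_div_cancel_left _ hk.pos,
    Nat.mul_div_mul_left _ _ hk.pos]

theorem prime_mul_totient_eq_totient_mul_add {p : ℕ} (hp : p.Prime) (s : ℕ) :
    p * Nat.totient s = Nat.totient (p * s) + if ¬ p ∣ s then Nat.totient s else 0 := by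
  split_ifs with h
  · rw [Nat.totient_mul_of_prime_of_dvd hp h, add_zero]
  · rw [Nat.totient_mul_of_prime_of_not_dvd hp h, ← Nat.succ_mul, Nat.succ_eq_add_one,
      Nat.sub_add_cancel hp.one_le]

theorem prime_mul_sum_totient_mul {R : Type*} [Semiring R] {p : ℕ} (hp : p.Prime)
    (S : Finset ℕ) (f : ℕ → R) :
    (p : R) * ∑ s ∈ S, (Nat.totient s : R) * f s =
      ∑ s ∈ S, (Nat.totient (p * s) : R) * f s +
        ∑ s ∈ S with ¬ p ∣ s, (Nat.totient s : R) * f s := by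
  rw [mul_sum, sum_filter, ← sum_add_distrib]
  refine sum_congr rfl fun s _ => ?_
  rw [← mul_assoc, ← Nat.cast_mul, prime_mul_totient_eq_totient_mul_add hp, Nat.cast_add, add_mul,
    Nat.cast_ite, Nat.cast_zero, ite_mul, zero_mul]

theorem cycleIndex_eq_cycleIndex_two_mul_add_general {p : ℕ} (hp : p.Prime) (m : ℕ) (hm : 0 < m)
    (x : ℕ → ℚ) :
    cycleIndex m x =
      cycleIndex (p * m) (fun r => if p ∣ r then x (r / p) else 0) +
        (1 / ((p : ℚ) * m)) *
          ∑ r ∈ m.divisors with ¬ p ∣ r, (Nat.totient r : ℚ) * x r ^ (m / r) := by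
  have hp₀ : (p : ℚ) ≠ 0 := Nat.cast_ne_zero.2 hp.ne_zero
  have hm₀ : (m : ℚ) ≠ 0 := Nat.cast_ne_zero.2 hm.ne'
  rw [cycleIndex_mul_ite_dvd hp.ne_zero, ← mul_add, ← prime_mul_sum_totient_mul hp, cycleIndex]
  field_simp

/-- `I_m(x) = I_{2m}(y) + (1/(2m))·∑_{r | m, r odd} φ(r)·x(r)^{m/r}`, where
`y(r) = 0` for odd `r` and `y(r) = x(r/2)` for even `r`. -/
theorem cycleIndex_eq_cycleIndex_two_mul_add (m : ℕ) (hm : 0 < m) (x : ℕ → ℚ) :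
    cycleIndex m x =
      cycleIndex (2 * m) (fun r => if Odd r then 0 else x (r / 2)) +
        (1 / (2 * (m : ℚ))) *
          ∑ r ∈ m.divisors.filter (fun r => Odd r),
            (Nat.totient r : ℚ) * x r ^ (m / r) := by
  simpa only [← even_iff_two_dvd, ← Nat.not_even_iff_odd, ite_not, Nat.cast_ofNat] using
    cycleIndex_eq_cycleIndex_two_mul_add_general Nat.prime_two m hm x
end

section
/- Let m be a positive integer and let x, y : ℕ → ℚ be functions satisfying y(r)² = x(r) for every odd positive integer r and y(2s) = x(s) for every positive integer s. Then I_m(x) = I_{2m}(y). -/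
open Finset

/-!
The cycle index averages, over the elements `a` of `ℤ/n`, the monomial of the cycle type of
translation by `a`, which has `gcd n a` cycles of length `n / gcd n a`. The reduction `ℤ/2m → ℤ/m`
is two-to-one, and the relations between `x` and `y` say that the monomial of `a` evaluated at `y`
is the monomial of its reduction evaluated at `x`. The same holds for `ℤ/km → ℤ/m`.
-/

section RangeSums

variable {M : Type*} [AddCommMonoid M]

theorem sum_divisors_totient_div_nsmul (n : ℕ) (f : ℕ → M) :
    ∑ d ∈ n.divisors, Nat.totient (n / d) • f d = ∑ a ∈ range n, f (n.gcd a) := by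
  have gcd_mem_divisors : ∀ a ∈ range n, n.gcd a ∈ n.divisors := fun a ha ↦
    Nat.mem_divisors.mpr ⟨n.gcd_dvd_left a, Nat.ne_zero_of_lt (mem_range.mp ha)⟩
  rw [← sum_fiberwise_of_maps_to' gcd_mem_divisors]
  refine sum_congr rfl fun d hd ↦ ?_
  rw [sum_const, Nat.totient_div_of_dvd (Nat.dvd_of_mem_divisors hd)]

theorem sum_range_mul_of_periodic {f : ℕ → M} {m : ℕ} (hf : Function.Periodic f m) (k : ℕ) :
    ∑ a ∈ range (k * m), f a = k • ∑ a ∈ range m, f a := by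
  induction k with
  | zero => simp
  | succ k ih =>
    have shift (a : ℕ) : f (k * m + a) = f a := by
      simpa [add_comm] using hf.nsmul k a
    rw [add_one_mul, sum_range_add, ih, succ_nsmul]
    simp only [shift]

end RangeSums

theorem cycleIndex_eq_sum_range (n : ℕ) (x : ℕ → ℚ) :
    cycleIndex n x = (1 / (n : ℚ)) * ∑ a ∈ range n, x (n / n.gcd a) ^ n.gcd a := by
  rw [cycleIndex, ← sum_divisors_totient_div_nsmul n fun d ↦ x (n / d) ^ d,
    ← Nat.sum_div_divisors]
  congr 1
  refine sum_congr rfl fun d hd ↦ ?_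
  obtain ⟨hdn, hn⟩ := Nat.mem_divisors.mp hd
  rw [nsmul_eq_mul, Nat.div_div_self hdn hn]

theorem exists_gcd_mul_left_eq_mul {k m : ℕ} (hk : 0 < k) (hm : 0 < m) (a : ℕ) :
    ∃ d e, d * e = k ∧ Nat.Coprime (m / m.gcd a) e ∧ (k * m).gcd a = e * m.gcd a ∧
      k * m / (k * m).gcd a = d * (m / m.gcd a) := by
  have gcd_gcd : m.gcd ((k * m).gcd a) = m.gcd a := by
    rw [← Nat.gcd_assoc, Nat.gcd_mul_left_right]
  have gcd_pos : 0 < m.gcd a := Nat.gcd_pos_of_pos_left a hm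
  obtain ⟨e, he⟩ : ∃ e, (k * m).gcd a = e * m.gcd a :=
    exists_eq_mul_left_of_dvd (Nat.gcd_dvd_gcd_mul_left_left m a k)
  obtain ⟨d, rfl⟩ : e ∣ k := by
    refine Nat.dvd_of_mul_dvd_mul_right gcd_pos ?_
    rw [← he, ← Nat.gcd_mul_left]
    exact Nat.gcd_dvd_gcd_mul_left_right (k * m) a k
  have e_pos : 0 < e := Nat.pos_of_mul_pos_right hk
  have coprime : Nat.Coprime (m / m.gcd a) e := by
    have h := Nat.coprime_div_gcd_div_gcd (m := m) (n := (e * d * m).gcd a) (gcd_gcd ▸ gcd_pos)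
    rwa [gcd_gcd, he, Nat.mul_div_cancel _ gcd_pos] at h
  refine ⟨d, e, mul_comm d e, coprime, he, ?_⟩
  rw [he, mul_assoc, Nat.mul_div_mul_left _ _ e_pos, Nat.mul_div_assoc d (m.gcd_dvd_left a)]

theorem pow_gcd_mul_left_eq_pow_gcd {M : Type*} [Monoid M] {k m : ℕ} (hk : 0 < k) (hm : 0 < m)
    {x y : ℕ → M}
    (hxy : ∀ d e s : ℕ, 0 < s → d * e = k → Nat.Coprime s e → y (d * s) ^ e = x s) (a : ℕ) :
    y (k * m / (k * m).gcd a) ^ (k * m).gcd a = x (m / m.gcd a) ^ m.gcd a := by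
  obtain ⟨d, e, hde, hcop, hgcd, hdiv⟩ := exists_gcd_mul_left_eq_mul hk hm a
  have hs : 0 < m / m.gcd a := Nat.div_gcd_pos_of_pos_left a hm
  rw [hdiv, hgcd, pow_mul, hxy d e _ hs hde hcop]

/- Every `r` is uniquely `d * s` with `d = gcd r k`, so that `s` is coprime to `e = k / d`: the
hypothesis is a division-free form of `y r ^ (k / gcd r k) = x (r / gcd r k)`. -/
theorem cycleIndex_eq_cycleIndex_two_mul_general (k m : ℕ) (hk : 0 < k) (hm : 0 < m)
    (x y : ℕ → ℚ)
    (hxy : ∀ d e s : ℕ, 0 < s → d * e = k → Nat.Coprime s e → y (d * s) ^ e = x s) :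
    cycleIndex m x = cycleIndex (k * m) y := by
  have hperiodic : Function.Periodic (fun a ↦ x (m / m.gcd a) ^ m.gcd a) m := fun a ↦ by
    simp only [Nat.gcd_add_self_right]
  have hk' : (k : ℚ) ≠ 0 := Nat.cast_ne_zero.mpr hk.ne'
  rw [cycleIndex_eq_sum_range, cycleIndex_eq_sum_range]
  simp only [pow_gcd_mul_left_eq_pow_gcd hk hm hxy]
  rw [sum_range_mul_of_periodic hperiodic k, nsmul_eq_mul, Nat.cast_mul]
  field_simp

/-- If `y(r)² = x(r)` for odd positive `r` and `y(2s) = x(s)` for positive `s`,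
then `I_m(x) = I_{2m}(y)`. -/
theorem cycleIndex_eq_cycleIndex_two_mul (m : ℕ) (hm : 0 < m) (x y : ℕ → ℚ)
    (hodd : ∀ r : ℕ, 0 < r → Odd r → y r ^ 2 = x r)
    (heven : ∀ s : ℕ, 0 < s → y (2 * s) = x s) :
    cycleIndex m x = cycleIndex (2 * m) y := by
  refine cycleIndex_eq_cycleIndex_two_mul_general 2 m two_pos hm x y fun d e s hs hde hcop ↦ ?_
  obtain rfl | rfl := (Nat.dvd_prime Nat.prime_two).mp (Dvd.intro e hde)
  · obtain rfl : e = 2 := by lia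
    simpa only [one_mul] using hodd s hs (Nat.coprime_two_right.mp hcop)
  · obtain rfl : e = 1 := by lia
    simpa only [pow_one] using heven s hs
end

section
/- Let m be a positive integer. Then for every function x : ℕ → ℚ, 2·I_{2m}(a) = I_m(b) + 1, where a : ℕ → ℚ is defined by a(r) := x(r) for odd r and a(r) := 1 for even r, and b : ℕ → ℚ is defined by b(r) := x(r)² for odd r and b(r) := 1 for even r. -/
/-!
Since `∑_{r ∣ n} φ(r) = n`, the constant family `1` has cycle index `1`, so `n * (I_n(x) - 1)` is
the sum of `φ(r) * (x(r)^(n/r) - 1)` over `r ∣ n`, in which every `r` with `x(r) = 1` drops out.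
If `x` is `1` at the divisors of `k * m` that do not divide `m`, what remains for `n = k * m` is
the sum over `r ∣ m`, with exponents `k * (m / r)`: this is the sum belonging to `I_m(x^k)`.
For `k = 2`, an odd divisor of `2 * m` divides `m`.
-/

open Finset

lemma natCast_mul_cycleIndex_sub_one {n : ℕ} (hn : n ≠ 0) (x : ℕ → ℚ) :
    (n : ℚ) * (cycleIndex n x - 1) =
      ∑ r ∈ n.divisors, (Nat.totient r : ℚ) * (x r ^ (n / r) - 1) := by
  have sum_totient : ∑ r ∈ n.divisors, (Nat.totient r : ℚ) = n := by
    exact_mod_cast Nat.sum_totient n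
  have hn' : (n : ℚ) ≠ 0 := Nat.cast_ne_zero.mpr hn
  simp only [cycleIndex, mul_sub, mul_one, sum_sub_distrib, sum_totient]
  rw [← mul_assoc, mul_one_div_cancel hn', one_mul]

lemma sum_divisors_mul_pow_sub_one {R : Type*} [Ring R] {k m : ℕ} (hk : k ≠ 0) (hm : m ≠ 0)
    (w x : ℕ → R) (hx : ∀ r, r ∣ k * m → ¬ r ∣ m → x r = 1) :
    ∑ r ∈ (k * m).divisors, w r * (x r ^ (k * m / r) - 1) =
      ∑ r ∈ m.divisors, w r * ((x r ^ k) ^ (m / r) - 1) := by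
  have hsub : m.divisors ⊆ (k * m).divisors :=
    Nat.divisors_subset_of_dvd (mul_ne_zero hk hm) (dvd_mul_left m k)
  refine (sum_subset_zero_on_sdiff hsub (fun r hr => ?_) (fun r hr => ?_)).symm
  · obtain ⟨hrkm, hrm⟩ := mem_sdiff.mp hr
    have hxr : x r = 1 :=
      hx r (Nat.dvd_of_mem_divisors hrkm) fun h => hrm (Nat.mem_divisors.mpr ⟨h, hm⟩)
    rw [hxr, one_pow, sub_self, mul_zero]
  · rw [Nat.mul_div_assoc k (Nat.dvd_of_mem_divisors hr), pow_mul]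

theorem two_mul_cycleIndex_primed_general {k m : ℕ} (hk : k ≠ 0) (hm : m ≠ 0) (x : ℕ → ℚ)
    (hx : ∀ r, r ∣ k * m → ¬ r ∣ m → x r = 1) :
    k * cycleIndex (k * m) x = cycleIndex m (fun r => x r ^ k) + (k - 1) := by
  have key : (m : ℚ) * (k * (cycleIndex (k * m) x - 1)) =
      m * (cycleIndex m (fun r => x r ^ k) - 1) :=
    calc (m : ℚ) * (k * (cycleIndex (k * m) x - 1))
      _ = (k * m : ℕ) * (cycleIndex (k * m) x - 1) := by push_cast; ring
      _ = ∑ r ∈ (k * m).divisors, (Nat.totient r : ℚ) * (x r ^ (k * m / r) - 1) :=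
        natCast_mul_cycleIndex_sub_one (mul_ne_zero hk hm) x
      _ = ∑ r ∈ m.divisors, (Nat.totient r : ℚ) * ((x r ^ k) ^ (m / r) - 1) :=
        sum_divisors_mul_pow_sub_one hk hm _ x hx
      _ = m * (cycleIndex m (fun r => x r ^ k) - 1) :=
        (natCast_mul_cycleIndex_sub_one hm _).symm
  linear_combination mul_left_cancel₀ (Nat.cast_ne_zero.mpr hm) key

/-- `2·I_{2m}(a) = I_m(b) + 1`, where `a(r) = x(r)` for odd `r`, `a(r) = 1` for
even `r`, and `b(r) = x(r)²` for odd `r`, `b(r) = 1` for even `r`. -/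
theorem two_mul_cycleIndex_primed (m : ℕ) (hm : 0 < m) (x : ℕ → ℚ) :
    2 * cycleIndex (2 * m) (fun r => if Odd r then x r else 1) =
      cycleIndex m (fun r => if Odd r then x r ^ 2 else 1) + 1 := by
  have eq_one : ∀ r, r ∣ 2 * m → ¬ r ∣ m → (if Odd r then x r else 1) = 1 := fun r h2m hm =>
    if_neg fun hodd => hm ((Nat.coprime_two_right.mpr hodd).dvd_of_dvd_mul_left h2m)
  have h := two_mul_cycleIndex_primed_general two_ne_zero hm.ne' _ eq_one
  simp only [ite_pow, one_pow, Nat.cast_ofNat] at h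
  linear_combination h
end

section
/- Let p > 3 be a prime such that q = (p+1)/2 is also prime. Then for every z ∈ ℚ, 2·c_o(p, z) = c_o(p+1, z) + 1. -/
open Finset

/-- Generating function by valency for oriented circulant graphs of odd prime
order `p`:
`c_o(p,z) = (1/(p-1))·(∑_{r | p-1, r even} φ(r) + ∑_{r | p-1, r odd} φ(r)·(1+2z^r)^{(p-1)/(2r)})`. -/
def cOrientedPrime (p : ℕ) (z : ℚ) : ℚ :=
  (1 / ((p : ℚ) - 1)) *
    ((∑ r ∈ (p - 1).divisors.filter (fun r => Even r), (Nat.totient r : ℚ)) +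
      ∑ r ∈ (p - 1).divisors.filter (fun r => Odd r),
        (Nat.totient r : ℚ) * (1 + 2 * z ^ r) ^ ((p - 1) / (2 * r)))

/-- Generating function by valency for oriented circulant graphs of order `2q`,
`q` an odd prime:
`c_o(2q,z) = (1/(q-1))·(∑_{r | q-1, r even} φ(r) + ∑_{r | q-1, r odd} φ(r)·(1+2z^r)^{(q-1)/r})`. -/
def cOrientedTwicePrime (q : ℕ) (z : ℚ) : ℚ :=
  (1 / ((q : ℚ) - 1)) *
    ((∑ r ∈ (q - 1).divisors.filter (fun r => Even r), (Nat.totient r : ℚ)) +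
      ∑ r ∈ (q - 1).divisors.filter (fun r => Odd r),
        (Nat.totient r : ℚ) * (1 + 2 * z ^ r) ^ ((q - 1) / r))

/-!
By Gauss's identity `∑_{r ∣ n} φ(r) = n`, each generating function is `1` plus a normalized sum over
odd divisors only. Put `m = q - 1`, so that `p - 1 = 2m` has the same odd divisors as `m`, and
`(p - 1) / (2r) = m / r`. So `c_o(p, z) - 1` and `c_o(2q, z) - 1` are the same sum divided by
`2m` and by `m` respectively.
-/

theorem filter_coprime_divisors_mul {a : ℕ} (ha : a ≠ 0) (m : ℕ) :
    (a * m).divisors.filter a.Coprime = m.divisors.filter a.Coprime := by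
  ext r
  simp only [mem_filter, Nat.mem_divisors, mul_ne_zero_iff, and_congr_left_iff]
  intro hr
  rw [hr.symm.dvd_mul_left, and_iff_right ha]

theorem filter_odd_divisors_two_mul (m : ℕ) :
    (2 * m).divisors.filter (fun r => Odd r) = m.divisors.filter (fun r => Odd r) := by
  simpa only [Nat.coprime_two_left] using filter_coprime_divisors_mul two_ne_zero m

theorem sum_totient_filter_not_add_sum_totient_mul_filter {R : Type*} [NonAssocRing R] (n : ℕ)
    (P : ℕ → Prop) [DecidablePred P] [∀ r, Decidable (¬P r)] (f : ℕ → R) :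
    ∑ r ∈ n.divisors.filter (fun r => ¬P r), (Nat.totient r : R) +
        ∑ r ∈ n.divisors.filter P, (Nat.totient r : R) * f r =
      n + ∑ r ∈ n.divisors.filter P, (Nat.totient r : R) * (f r - 1) := by
  have gauss : ∑ r ∈ n.divisors.filter P, (Nat.totient r : R) +
      ∑ r ∈ n.divisors.filter (fun r => ¬P r), (Nat.totient r : R) = n := by
    rw [sum_filter_add_sum_filter_not, ← Nat.cast_sum, Nat.sum_totient]
  simp only [mul_sub, mul_one, sum_sub_distrib]
  rw [← gauss]
  abel

/-- The sum `∑_{r ∣ m, r odd} φ(r)·((1 + 2z^r)^{m/r} - 1)`, which is the common numerator of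
`c_o(p, z) - 1` and `c_o(2q, z) - 1` when `p - 1 = 2m` and `q - 1 = m`. -/
def oddDivisorExcess (m : ℕ) (z : ℚ) : ℚ :=
  ∑ r ∈ m.divisors.filter (fun r => Odd r), (Nat.totient r : ℚ) * ((1 + 2 * z ^ r) ^ (m / r) - 1)

theorem cOrientedPrime_two_mul_add_one {m : ℕ} (hm : m ≠ 0) (z : ℚ) :
    cOrientedPrime (2 * m + 1) z = 1 + oddDivisorExcess m z / (2 * m) := by
  have hm' : (m : ℚ) ≠ 0 := Nat.cast_ne_zero.mpr hm
  simp only [cOrientedPrime, oddDivisorExcess, ← Nat.not_odd_iff_even]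
  rw [sum_totient_filter_not_add_sum_totient_mul_filter]
  simp only [Nat.add_sub_cancel, filter_odd_divisors_two_mul, Nat.mul_div_mul_left _ _ two_pos]
  push_cast
  rw [add_sub_cancel_right]
  field

theorem cOrientedTwicePrime_add_one {m : ℕ} (hm : m ≠ 0) (z : ℚ) :
    cOrientedTwicePrime (m + 1) z = 1 + oddDivisorExcess m z / m := by
  have hm' : (m : ℚ) ≠ 0 := Nat.cast_ne_zero.mpr hm
  simp only [cOrientedTwicePrime, oddDivisorExcess, ← Nat.not_odd_iff_even]
  rw [sum_totient_filter_not_add_sum_totient_mul_filter]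
  simp only [Nat.add_sub_cancel]
  push_cast
  rw [add_sub_cancel_right]
  field

theorem two_mul_cOriented_general {p q : ℕ} (hq : 1 < q) (hpq : p + 1 = 2 * q) (z : ℚ) :
    2 * cOrientedPrime p z = cOrientedTwicePrime q z + 1 := by
  obtain ⟨m, rfl⟩ : ∃ m, q = m + 1 := Nat.exists_eq_add_one.mpr (by lia)
  obtain rfl : p = 2 * m + 1 := by lia
  have hm : m ≠ 0 := by lia
  rw [cOrientedPrime_two_mul_add_one hm, cOrientedTwicePrime_add_one hm]
  ring

/-- If `p > 3` and `q = (p+1)/2` are both prime, then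
`2·c_o(p,z) = c_o(p+1,z) + 1` (note `p + 1 = 2q`). -/
theorem two_mul_cOriented (p q : ℕ) (hp : p.Prime) (hp3 : 3 < p)
    (hq : q.Prime) (hpq : p + 1 = 2 * q) (z : ℚ) :
    2 * cOrientedPrime p z = cOrientedTwicePrime q z + 1 :=
  two_mul_cOriented_general hq.one_lt hpq z
end

section
/- For every odd prime p, C_sd(p) = C_t(p) + C_su(p); that is, the number of self-complementary directed circulant graphs of prime order p equals the number of circulant tournaments of order p plus the number of self-complementary undirected circulant graphs of order p. -/
open Finset

/-- Number of self-complementary directed circulant graphs of odd prime order `p`: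
`C_sd(p) = (1/(p-1))·∑_{r | p-1, r even} φ(r)·2^{(p-1)/r}`. -/
def Csd (p : ℕ) : ℚ :=
  (1 / ((p : ℚ) - 1)) *
    ∑ r ∈ (p - 1).divisors.filter (fun r => Even r),
      (Nat.totient r : ℚ) * (2 : ℚ) ^ ((p - 1) / r)

/-- Number of self-complementary undirected circulant graphs of odd prime order `p`:
`C_su(p) = (2/(p-1))·∑_{r | (p-1)/2, r even} φ(r)·2^{(p-1)/(2r)}`. -/
def Csu (p : ℕ) : ℚ :=
  (2 / ((p : ℚ) - 1)) *
    ∑ r ∈ ((p - 1) / 2).divisors.filter (fun r => Even r),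
      (Nat.totient r : ℚ) * (2 : ℚ) ^ ((p - 1) / (2 * r))

/-- Number of circulant tournaments of odd prime order `p`:
`C_t(p) = (1/(p-1))·∑_{r | p-1, r odd} φ(r)·2^{(p-1)/(2r)}`. -/
def Ct (p : ℕ) : ℚ :=
  (1 / ((p : ℚ) - 1)) *
    ∑ r ∈ (p - 1).divisors.filter (fun r => Odd r),
      (Nat.totient r : ℚ) * (2 : ℚ) ^ ((p - 1) / (2 * r))

theorem filter_not_dvd_divisors_mul {q : ℕ} (hq : q.Prime) (m : ℕ) :
    {r ∈ (q * m).divisors | ¬q ∣ r} = {r ∈ m.divisors | ¬q ∣ r} := by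
  ext r
  simp only [mem_filter, Nat.mem_divisors, mul_ne_zero_iff, hq.ne_zero, ne_eq, not_false_eq_true,
    true_and, and_congr_left_iff]
  intro hr _
  exact (hq.coprime_iff_not_dvd.mpr hr).symm.dvd_mul_left

theorem sum_totient_nsmul_filter_dvd_divisors_mul {M : Type*} [AddCommMonoid M] {q : ℕ}
    (hq : q.Prime) (m : ℕ) (f : ℕ → M) :
    ∑ r ∈ (q * m).divisors with q ∣ r, Nat.totient r • f r =
      (q - 1) • ∑ r ∈ (q * m).divisors with ¬q ∣ r, Nat.totient r • f (q * r) +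
        q • ∑ r ∈ m.divisors with q ∣ r, Nat.totient r • f (q * r) := by
  rw [sum_filter_dvd_divisors_mul hq.ne_zero, filter_not_dvd_divisors_mul hq,
    ← sum_filter_not_add_sum_filter m.divisors (q ∣ ·), smul_sum, smul_sum]
  congr 1
  · refine sum_congr rfl fun s hs => ?_
    rw [Nat.totient_mul_of_prime_of_not_dvd hq (mem_filter.mp hs).2, mul_smul]
  · refine sum_congr rfl fun s hs => ?_
    rw [Nat.totient_mul_of_prime_of_dvd hq (mem_filter.mp hs).2, mul_smul]

theorem sum_totient_mul_filter_even_divisors_two_mul {R : Type*} [Semiring R] (m : ℕ)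
    (f : ℕ → R) :
    ∑ r ∈ (2 * m).divisors with Even r, (Nat.totient r : R) * f r =
      ∑ r ∈ (2 * m).divisors with Odd r, (Nat.totient r : R) * f (2 * r) +
        2 * ∑ r ∈ m.divisors with Even r, (Nat.totient r : R) * f (2 * r) := by
  simpa only [even_iff_two_dvd, ← Nat.not_even_iff_odd, nsmul_eq_mul, Nat.add_one_sub_one,
    one_smul, Nat.cast_ofNat] using sum_totient_nsmul_filter_dvd_divisors_mul Nat.prime_two m f

theorem Csd_eq_Ct_add_Csu_general (p : ℕ) (hp : p ≠ 1) (hodd : Odd p) :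
    Csd p = Ct p + Csu p := by
  have hp_sub : (p : ℚ) - 1 ≠ 0 := sub_ne_zero.mpr (Nat.cast_ne_one.mpr hp)
  obtain ⟨m, hm⟩ : ∃ m, p - 1 = 2 * m := (Nat.Odd.sub_odd hodd odd_one).two_dvd
  have hhalf : 2 * m / 2 = m := Nat.mul_div_cancel_left m two_pos
  have hsum := sum_totient_mul_filter_even_divisors_two_mul m fun r => (2 : ℚ) ^ (2 * m / r)
  rw [Csd, Ct, Csu, hm, hhalf]
  field_simp
  exact hsum

/-- For every odd prime `p`, `C_sd(p) = C_t(p) + C_su(p)`. -/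
theorem Csd_eq_Ct_add_Csu (p : ℕ) (hp : p.Prime) (hodd : Odd p) :
    Csd p = Ct p + Csu p :=
  Csd_eq_Ct_add_Csu_general p hp.ne_one hodd
end

section
/- Let p > 3 be a prime such that q = (p+1)/2 is also prime. Then 4·C_d(p) − C_d(p+1) = 4·C_u(p) − C_u(p+1). -/
open Finset

/-- Number of directed circulant graphs of odd prime order `p`:
`C_d(p) = (1/(p-1))·∑_{r | p-1} φ(r)·2^{(p-1)/r}`. -/
def Cd (p : ℕ) : ℚ :=
  (1 / ((p : ℚ) - 1)) *
    ∑ r ∈ (p - 1).divisors, (Nat.totient r : ℚ) * (2 : ℚ) ^ ((p - 1) / r)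

/-- Number of undirected circulant graphs of odd prime order `p`:
`C_u(p) = (2/(p-1))·∑_{r | (p-1)/2} φ(r)·2^{(p-1)/(2r)}`. -/
def Cu (p : ℕ) : ℚ :=
  (2 / ((p : ℚ) - 1)) *
    ∑ r ∈ ((p - 1) / 2).divisors,
      (Nat.totient r : ℚ) * (2 : ℚ) ^ ((p - 1) / (2 * r))

/-- Number of directed circulant graphs of order `2q`, `q` an odd prime:
`C_d(2q) = 2·(1/(q-1))·∑_{r | q-1} φ(r)·4^{(q-1)/r}`. -/
def CdTwice (q : ℕ) : ℚ :=
  2 * ((1 / ((q : ℚ) - 1)) *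
    ∑ r ∈ (q - 1).divisors, (Nat.totient r : ℚ) * (4 : ℚ) ^ ((q - 1) / r))

/-- Number of undirected circulant graphs of order `2q`, `q` an odd prime:
`C_u(2q) = 2·(2/(q-1))·∑_{r | (q-1)/2} φ(r)·4^{(q-1)/(2r)}`. -/
def CuTwice (q : ℕ) : ℚ :=
  2 * ((2 / ((q : ℚ) - 1)) *
    ∑ r ∈ ((q - 1) / 2).divisors,
      (Nat.totient r : ℚ) * (4 : ℚ) ^ ((q - 1) / (2 * r)))

/-!
Up to a factor `2` for order `2q`, all four counts have the form `S(x, n) / n` with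
`S(x, n) = ∑_{r ∣ n} φ(r) x^(n/r)`. For a prime `ℓ`, the difference `S(x, ℓn) - S(x^ℓ, n)` is the
part of `S(x, ℓn)` carried by the divisors `r` of `ℓn` that do not divide `n`, all of which are
multiples of `ℓ`. Hence `r ↦ ℓr` maps these divisors for `n = m` bijectively onto those for
`n = ℓm`; it preserves the exponent and multiplies the totient by `ℓ`, so the difference is
multiplied by `ℓ`. The theorem is the case `ℓ = x = 2` with `p = 4m + 1` and `q = 2m + 1`.
-/

section NecklaceSum

variable {R : Type*} [Semiring R] {ℓ : ℕ}

/-- The sum `∑_{r ∣ n} φ(r) x^(n/r)`. By Burnside's lemma it is `n` times the number of necklaces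
with `n` beads in `x` colours when `x` is a positive integer and `n ≠ 0`. -/
def necklaceSum (x : R) (n : ℕ) : R :=
  ∑ r ∈ n.divisors, (r.totient : R) * x ^ (n / r)

theorem prime_dvd_of_dvd_mul_of_not_dvd {r n : ℕ} (hℓ : ℓ.Prime) (hr : r ∣ ℓ * n)
    (hrn : ¬ r ∣ n) : ℓ ∣ r := by
  by_contra hℓr
  exact hrn ((hℓ.coprime_iff_not_dvd.2 hℓr).symm.dvd_of_dvd_mul_left hr)

theorem mem_divisors_mul_sdiff_divisors {k n r : ℕ} (hk : k ≠ 0) :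
    r ∈ (k * n).divisors \ n.divisors ↔ r ∣ k * n ∧ ¬ r ∣ n := by
  rcases eq_or_ne n 0 with rfl | hn
  · simp
  · simp [hk, hn]

theorem divisors_mul_sdiff_divisors_eq_image (hℓ : ℓ.Prime) (n : ℕ) :
    (ℓ * (ℓ * n)).divisors \ (ℓ * n).divisors =
      ((ℓ * n).divisors \ n.divisors).image (ℓ * ·) := by
  ext r
  simp only [mem_image, mem_divisors_mul_sdiff_divisors hℓ.ne_zero]
  constructor
  · rintro ⟨hr, hrn⟩
    obtain ⟨s, rfl⟩ := prime_dvd_of_dvd_mul_of_not_dvd hℓ hr hrn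
    rw [Nat.mul_dvd_mul_iff_left hℓ.pos] at hr hrn
    exact ⟨s, ⟨hr, hrn⟩, rfl⟩
  · rintro ⟨s, hs, rfl⟩
    simpa only [Nat.mul_dvd_mul_iff_left hℓ.pos] using hs

theorem necklaceSum_mul (x : R) {k : ℕ} (hk : k ≠ 0) (n : ℕ) :
    necklaceSum x (k * n) =
      ∑ r ∈ (k * n).divisors \ n.divisors, (r.totient : R) * x ^ (k * n / r) +
        necklaceSum (x ^ k) n := by
  have divisors_subset : n.divisors ⊆ (k * n).divisors := by
    rcases eq_or_ne n 0 with rfl | hn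
    · simp
    · exact Nat.divisors_subset_of_dvd (mul_ne_zero hk hn) (dvd_mul_left n k)
  rw [necklaceSum, necklaceSum, ← sum_sdiff divisors_subset]
  congr 1
  refine sum_congr rfl fun r hr => ?_
  rw [Nat.mul_div_assoc k (Nat.dvd_of_mem_divisors hr), pow_mul]

theorem sum_divisors_mul_sdiff_divisors (hℓ : ℓ.Prime) (x : R) (n : ℕ) :
    ∑ r ∈ (ℓ * (ℓ * n)).divisors \ (ℓ * n).divisors,
        (r.totient : R) * x ^ (ℓ * (ℓ * n) / r) =
      ℓ * ∑ r ∈ (ℓ * n).divisors \ n.divisors, (r.totient : R) * x ^ (ℓ * n / r) := by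
  rw [divisors_mul_sdiff_divisors_eq_image hℓ,
    sum_image (mul_right_injective₀ hℓ.ne_zero).injOn, mul_sum]
  refine sum_congr rfl fun r hr => ?_
  obtain ⟨hrn, hr⟩ := (mem_divisors_mul_sdiff_divisors hℓ.ne_zero).1 hr
  have totient_mul : (ℓ * r).totient = ℓ * r.totient :=
    Nat.totient_mul_of_prime_of_dvd hℓ (prime_dvd_of_dvd_mul_of_not_dvd hℓ hrn hr)
  rw [totient_mul, Nat.mul_div_mul_left _ _ hℓ.pos, Nat.cast_mul, mul_assoc]

/-- Subtraction-free form of `S(x, ℓ²n) - S(x^ℓ, ℓn) = ℓ (S(x, ℓn) - S(x^ℓ, n))`. -/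
theorem necklaceSum_prime_mul_prime_mul (hℓ : ℓ.Prime) (x : R) (n : ℕ) :
    necklaceSum x (ℓ * (ℓ * n)) + ℓ * necklaceSum (x ^ ℓ) n =
      ℓ * necklaceSum x (ℓ * n) + necklaceSum (x ^ ℓ) (ℓ * n) := by
  rw [necklaceSum_mul x hℓ.ne_zero (ℓ * n), necklaceSum_mul x hℓ.ne_zero n,
    sum_divisors_mul_sdiff_divisors hℓ, mul_add, add_right_comm]

end NecklaceSum

theorem Cd_add_one (n : ℕ) : Cd (n + 1) = necklaceSum 2 n / n := by
  simp [Cd, necklaceSum, div_eq_inv_mul]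

theorem Cu_two_mul_add_one (n : ℕ) : Cu (2 * n + 1) = necklaceSum 2 n / n := by
  simp [Cu, necklaceSum, div_eq_inv_mul, Nat.mul_div_mul_left]

theorem CdTwice_add_one (n : ℕ) : CdTwice (n + 1) = 2 * (necklaceSum 4 n / n) := by
  simp [CdTwice, necklaceSum, div_eq_inv_mul]

theorem CuTwice_two_mul_add_one (n : ℕ) :
    CuTwice (2 * n + 1) = 2 * (necklaceSum 4 n / n) := by
  simp [CuTwice, necklaceSum, div_eq_inv_mul, Nat.mul_div_mul_left]

theorem four_mul_Cd_sub_general {p q : ℕ} (hq : Odd q) (hq1 : 1 < q) (hpq : p + 1 = 2 * q) :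
    4 * Cd p - CdTwice q = 4 * Cu p - CuTwice q := by
  obtain ⟨m, rfl⟩ := hq
  obtain rfl : p = 2 * (2 * m) + 1 := by omega
  have hm : (m : ℚ) ≠ 0 := by
    norm_cast
    omega
  have recurrence : necklaceSum (2 : ℚ) (2 * (2 * m)) + 2 * necklaceSum 4 m =
      2 * necklaceSum 2 (2 * m) + necklaceSum 4 (2 * m) := by
    convert necklaceSum_prime_mul_prime_mul Nat.prime_two (2 : ℚ) m using 3 <;> norm_num
  rw [Cd_add_one, Cu_two_mul_add_one, CdTwice_add_one, CuTwice_two_mul_add_one]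
  push_cast
  field_simp
  linear_combination 4 * recurrence

/-- If `p > 3` and `q = (p+1)/2` are both prime, then
`4·C_d(p) − C_d(p+1) = 4·C_u(p) − C_u(p+1)`. -/
theorem four_mul_Cd_sub (p q : ℕ) (hp : p.Prime) (hp3 : 3 < p)
    (hq : q.Prime) (hpq : p + 1 = 2 * q) :
    4 * Cd p - CdTwice q = 4 * Cu p - CuTwice q :=
  four_mul_Cd_sub_general (hq.odd_of_ne_two (by omega)) hq.one_lt hpq
end

section
/- For every odd prime p, the alternating sum c_o(p, −1) := (1/(p-1))·( ∑_{r | p-1, r even} φ(r) + ∑ِ_{r | p-1, r odd} φ(r)·(−1)^{(p-1)/(2r)} ) equals 1 if p ≡ 1 (mod 4) and equals 0 if p ≡ 3 (mod 4). -/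
/-!
Write `p - 1 = 2 n`. An odd `r` divides `2 n` exactly when it divides `n`, and then `n / r` has the
parity of `n`, so every sign in the second sum is `(-1) ^ n`. If `n` is even, the two sums add up to
`∑ φ(r) = 2 n` over all `r ∣ 2 n`. If `n` is odd, the odd divisors of `2 n` are all the divisors of
`n`, so the odd `r` contribute `-n`, the even ones `2 n - n = n`, and the two cancel.
-/

open Finset

/-- The alternating sum `c_o(p, -1)` for an odd prime `p`:
`(1/(p-1))·(∑_{r | p-1, r even} φ(r) + ∑_{r | p-1, r odd} φ(r)·(−1)^{(p-1)/(2r)})`. -/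
def cOrientedAtNegOne (p : ℕ) : ℚ :=
  (1 / ((p : ℚ) - 1)) *
    ((∑ r ∈ (p - 1).divisors.filter (fun r => Even r), (Nat.totient r : ℚ)) +
      ∑ r ∈ (p - 1).divisors.filter (fun r => Odd r),
        (Nat.totient r : ℚ) * (-1 : ℚ) ^ ((p - 1) / (2 * r)))

theorem odd_divisors_two_mul (n : ℕ) :
    {r ∈ (2 * n).divisors | Odd r} = {r ∈ n.divisors | Odd r} := by
  ext r
  simp only [mem_filter, Nat.mem_divisors, mul_ne_zero_iff, ne_eq, OfNat.ofNat_ne_zero,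
    not_false_eq_true, true_and, and_congr_left_iff]
  intro hr _
  exact (Nat.coprime_two_right.mpr hr).dvd_mul_left

theorem odd_divisors_of_odd {n : ℕ} (hn : Odd n) : {r ∈ n.divisors | Odd r} = n.divisors :=
  filter_true_of_mem fun _ hr => hn.of_dvd_nat (Nat.dvd_of_mem_divisors hr)

theorem sum_totient_even_add_sum_totient_odd (n : ℕ) :
    ∑ r ∈ n.divisors with Even r, r.totient + ∑ r ∈ n.divisors with Odd r, r.totient = n := by
  simp_rw [← Nat.not_even_iff_odd]
  rw [sum_filter_add_sum_filter_not, Nat.sum_totient]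

theorem neg_one_pow_div_of_odd {R : Type*} [Monoid R] [HasDistribNeg R] {n r : ℕ}
    (hr : Odd r) (hrn : r ∣ n) : (-1 : R) ^ (n / r) = (-1) ^ n := by
  obtain ⟨k, rfl⟩ := hrn
  rw [Nat.mul_div_cancel_left k hr.pos, pow_mul, hr.neg_one_pow]

theorem sum_totient_odd_mul_neg_one_pow {R : Type*} [Ring R] (n : ℕ) :
    ∑ r ∈ (2 * n).divisors with Odd r, (r.totient : R) * (-1) ^ (2 * n / (2 * r)) =
      (∑ r ∈ n.divisors with Odd r, r.totient : ℕ) * (-1) ^ n := by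
  rw [odd_divisors_two_mul, Nat.cast_sum, sum_mul]
  refine sum_congr rfl fun r hr => ?_
  obtain ⟨hrn, hr_odd⟩ := mem_filter.mp hr
  rw [Nat.mul_div_mul_left _ _ two_pos,
    neg_one_pow_div_of_odd hr_odd (Nat.dvd_of_mem_divisors hrn)]

theorem cOrientedAtNegOne_two_mul_add_one {n : ℕ} (hn : n ≠ 0) :
    cOrientedAtNegOne (2 * n + 1) =
      1 - (1 - (-1) ^ n) * (∑ r ∈ n.divisors with Odd r, r.totient : ℕ) / (2 * n) := by
  have htotal : ((∑ r ∈ (2 * n).divisors with Even r, r.totient : ℕ) : ℚ) +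
      (∑ r ∈ n.divisors with Odd r, r.totient : ℕ) = 2 * n := by
    rw [← odd_divisors_two_mul]
    exact_mod_cast sum_totient_even_add_sum_totient_odd (2 * n)
  rw [cOrientedAtNegOne, Nat.add_sub_cancel, sum_totient_odd_mul_neg_one_pow, ← Nat.cast_sum,
    eq_sub_of_add_eq htotal]
  push_cast
  field_simp
  ring

theorem cOrientedAtNegOne_two_mul_add_one_of_even {n : ℕ} (hn : n ≠ 0) (heven : Even n) :
    cOrientedAtNegOne (2 * n + 1) = 1 := by
  rw [cOrientedAtNegOne_two_mul_add_one hn, heven.neg_one_pow, sub_self, zero_mul, zero_div,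
    sub_zero]

theorem cOrientedAtNegOne_two_mul_add_one_of_odd {n : ℕ} (hodd : Odd n) :
    cOrientedAtNegOne (2 * n + 1) = 0 := by
  have hn : (n : ℚ) ≠ 0 := Nat.cast_ne_zero.mpr hodd.pos.ne'
  rw [cOrientedAtNegOne_two_mul_add_one hodd.pos.ne', hodd.neg_one_pow, odd_divisors_of_odd hodd,
    Nat.sum_totient]
  field_simp
  norm_num

theorem cOriented_neg_one_general (p : ℕ) (hp : p ≠ 1) :
    (p % 4 = 1 → cOrientedAtNegOne p = 1) ∧
    (p % 4 = 3 → cOrientedAtNegOne p = 0) := by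
  constructor <;> intro hmod
  · obtain ⟨n, hn, rfl⟩ : ∃ n, Even n ∧ p = 2 * n + 1 :=
      ⟨p / 2, by rw [Nat.even_iff]; omega, by omega⟩
    exact cOrientedAtNegOne_two_mul_add_one_of_even (by omega) hn
  · obtain ⟨n, hn, rfl⟩ : ∃ n, Odd n ∧ p = 2 * n + 1 :=
      ⟨p / 2, by rw [Nat.odd_iff]; omega, by omega⟩
    exact cOrientedAtNegOne_two_mul_add_one_of_odd hn

/-- For every odd prime `p`, `c_o(p,−1) = 1` if `p ≡ 1 (mod 4)`
and `c_o(p,−1) = 0` if `p ≡ 3 (mod 4)`. -/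
theorem cOriented_neg_one (p : ℕ) (hp : p.Prime) (hodd : Odd p) :
    (p % 4 = 1 → cOrientedAtNegOne p = 1) ∧
    (p % 4 = 3 → cOrientedAtNegOne p = 0) :=
  cOriented_neg_one_general p hp.ne_one
end
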